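/- Let (a_n)_{n≥0} be a sequence of real numbers with 1 = a_0 ≥ a_1 ≥ a_2 ≥ … and a_i − 2a_{i+1} + a_{i+2} ≥ 0 for all i ≥ 0. Then there exists a shift-invariant Borel probability measure μ on X = {0,1}^ℕ such that, writing p_w = μ([w]): (i) for every n ≥ 0, p_{0 0^n 0} = a_{n+2}, p_{0 0^n 1} = p_{1 0^n 0} = a_{n+1} − a_{n+2}, p_{1 0^n 1} = a_n − 2a_{n+1} + a_{n+2}; (ii) for every finite word w that is not a block of zeros and all ε, ε' ∈ {0,1}, p_{ε w ε'} = p_{ε w} p_{w ε'} / p_w. These relations determine μ uniquely, and μ is the unique measure of maximal measure-theoretic entropy among all shift-invariant Borel probability measures ν with ν([0^n]) = a_n for all n ≥ 1. -/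

import Mathlib

open MeasureTheory Filter Topology Set
open scoped ENNReal NNReal

/-!  General definitions: Bowen topological entropy (via covers by Bowen balls),
measure-theoretic (Kolmogorov–Sinai) entropy, generic points, saturated systems,
and the specification property. -/

variable {X : Type*}

/-- The Bowen ball of center `x`, order `n`, radius `ε` (for the metric
`d_n(x,y) = max_{0 ≤ j < n} d(T^j x, T^j y)`). -/
def bowenBall [PseudoMetricSpace X] (T : X → X) (x : X) (n : ℕ) (ε : ℝ) : Set X :=
  {y | ∀ j < n, dist (T^[j] x) (T^[j] y) < ε}

/-- `H_n^s(Z,ε)`: infimum of `Σ_i exp(-s n_i)` over countable covers of `Z` by Bowen balls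
`B_{n_i}(x_i,ε)` with all `n_i ≥ n`. -/
noncomputable def bowenH [PseudoMetricSpace X] (T : X → X) (Z : Set X) (s ε : ℝ) (n : ℕ) :
    ℝ≥0∞ :=
  ⨅ (C : Set (X × ℕ)) (_ : C.Countable) (_ : ∀ p ∈ C, n ≤ p.2)
    (_ : Z ⊆ ⋃ p ∈ C, bowenBall T p.1 p.2 ε),
    ∑' p : C, ENNReal.ofReal (Real.exp (-s * ((p : X × ℕ).2 : ℝ)))

/-- `h_top(Z,ε)`: the critical exponent of `s ↦ H^s(Z,ε) = sup_n H_n^s(Z,ε)`. -/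
noncomputable def bowenEntropyRes [PseudoMetricSpace X] (T : X → X) (Z : Set X) (ε : ℝ) :
    ℝ≥0∞ :=
  sInf ((fun s : ℝ≥0 => (s : ℝ≥0∞)) '' {s : ℝ≥0 | (⨆ n, bowenH T Z (s : ℝ) ε n) = 0})

/-- Bowen topological entropy of a subset `Z`: `h_top(Z) = lim_{ε → 0} h_top(Z,ε)`
(the limit being a supremum by monotonicity in `ε`). -/
noncomputable def bowenEntropy [PseudoMetricSpace X] (T : X → X) (Z : Set X) : ℝ≥0∞ :=
  ⨆ (ε : ℝ) (_ : 0 < ε), bowenEntropyRes T Z ε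

/-- Entropy of the partition `P ∨ T⁻¹P ∨ ⋯ ∨ T⁻⁽ⁿ⁻¹⁾P`, where a countable partition is
encoded as a function `P : X → ℕ`: it is the Shannon entropy of the map
`x ↦ (P x, P (T x), …, P (Tⁿ⁻¹ x))`. -/
noncomputable def partInfo [MeasurableSpace X] (T : X → X) (μ : Measure X) (P : X → ℕ)
    (n : ℕ) : ℝ≥0∞ :=
  ∑' l : List ℕ, ENNReal.ofReal (Real.negMulLog
    ((μ ((fun x => (List.range n).map fun j => P (T^[j] x)) ⁻¹' {l})).toReal))

/-- Measure-theoretic (Kolmogorov–Sinai) entropy `h_μ(T)`: supremum over finite measurable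
partitions `P` of `lim_n (1/n) H_μ(P ∨ T⁻¹P ∨ ⋯ ∨ T⁻⁽ⁿ⁻¹⁾P)` (the limit exists by
subadditivity, so it may be written as a `liminf`). -/
noncomputable def ksEntropy [MeasurableSpace X] (T : X → X) (μ : Measure X) : ℝ≥0∞ :=
  ⨆ (P : X → ℕ) (_ : Measurable P) (_ : (Set.range P).Finite),
    Filter.atTop.liminf fun n : ℕ => partInfo T μ P n / (n : ℝ≥0∞)

/-- `x` is a generic point for `μ` : the empirical measures `(1/n) Σ_{j<n} δ_{T^j x}`
converge to `μ` in the weak-star topology, i.e. Birkhoff averages of every continuous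
function converge to its integral. -/
def IsGeneric [TopologicalSpace X] [MeasurableSpace X] (T : X → X) (μ : Measure X)
    (x : X) : Prop :=
  ∀ f : C(X, ℝ), Tendsto (fun n : ℕ => (∑ j ∈ Finset.range n, f (T^[j] x)) / (n : ℝ))
    atTop (𝓝 (∫ y, f y ∂μ))

/-- `μ ∈ V(x)` : `μ` is a weak-star limit point of the empirical measures of `x`. -/
def IsLimitMeasure [TopologicalSpace X] [MeasurableSpace X] (T : X → X) (x : X)
    (μ : Measure X) : Prop :=
  ∃ φ : ℕ → ℕ, StrictMono φ ∧ ∀ f : C(X, ℝ),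
    Tendsto (fun m : ℕ => (∑ j ∈ Finset.range (φ m), f (T^[j] x)) / (φ m : ℝ))
      atTop (𝓝 (∫ y, f y ∂μ))

/-- A system is saturated if `h_top(G_μ) = h_μ` for every invariant Borel probability
measure `μ`. -/
def Saturated [PseudoMetricSpace X] [MeasurableSpace X] (T : X → X) : Prop :=
  ∀ μ : Measure X, IsProbabilityMeasure μ → MeasurePreserving T μ μ →
    bowenEntropy T {x | IsGeneric T μ x} = ksEntropy T μ

/-- The specification property. -/
def SpecificationProperty [PseudoMetricSpace X] (T : X → X) : Prop :=
  ∀ ε : ℝ, 0 < ε → ∃ m : ℕ, 1 ≤ m ∧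
    ∀ k : ℕ, 2 ≤ k → ∀ x : ℕ → X, ∀ a b : ℕ → ℕ,
      (∀ i < k, a i ≤ b i) →
      (∀ i, i + 1 < k → b i + m ≤ a (i + 1)) →
      ∃ y : X, ∀ i < k, ∀ n ≤ b i - a i,
        dist (T^[a i + n] y) (T^[n] (x i)) < ε

/-! Symbolic dynamics on `X = {0,1}^ℕ`. -/

/-- The metric `d(x,y) = (1/2)^(first difference)` on the symbolic space `{0,1}^ℕ`. -/
noncomputable instance : MetricSpace (ℕ → Bool) := PiNat.metricSpace

/-- The shift map on `{0,1}^ℕ`. -/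
def shift : (ℕ → Bool) → ℕ → Bool := fun x n => x (n + 1)

/-- The cylinder `[w]` of all sequences beginning with the finite word `w`. -/
def cyl (w : List Bool) : Set (ℕ → Bool) :=
  {x | ∀ i : Fin w.length, x i.1 = w.get i}

/-- `R(x,[w]) = r` : the frequency of visits of the orbit of `x` to the cylinder `[w]`
exists and equals `r`. -/
def hasFreq (w : List Bool) (x : ℕ → Bool) (r : ℝ) : Prop :=
  Filter.Tendsto (fun n : ℕ =>
      (∑ j ∈ Finset.range n, (cyl w).indicator (fun _ => (1 : ℝ)) (shift^[j] x)) / (n : ℝ))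
    Filter.atTop (nhds r)

/-- The values of `μ` on the cylinders `[ε 0^n ε']` prescribed by Lemma 5.4. -/
def cylRel (a : ℕ → ℝ) (μ : Measure (ℕ → Bool)) : Prop :=
  ∀ n : ℕ,
    (μ (cyl (false :: (List.replicate n false ++ [false])))).toReal = a (n + 2) ∧
    (μ (cyl (false :: (List.replicate n false ++ [true])))).toReal
      = a (n + 1) - a (n + 2) ∧
    (μ (cyl (true :: (List.replicate n false ++ [false])))).toReal
      = a (n + 1) - a (n + 2) ∧
    (μ (cyl (true :: (List.replicate n false ++ [true])))).toReal
      = a n - 2 * a (n + 1) + a (n + 2)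

/-- The recursion relations `p_{ε w ε'} = p_{ε w} p_{w ε'} / p_w` (in multiplicative form)
for every word `w` that is not a block of zeros. -/
def markovRel (μ : Measure (ℕ → Bool)) : Prop :=
  ∀ w : List Bool, w ≠ List.replicate w.length false → ∀ e e' : Bool,
    (μ (cyl (e :: (w ++ [e'])))).toReal * (μ (cyl w)).toReal =
      (μ (cyl (e :: w))).toReal * (μ (cyl (w ++ [e']))).toReal

/-! Write `p` for the cylinder masses of an invariant measure `ν` and `h_n` for the entropy of a
letter conditional on the `n` preceding ones. The coordinate partition is a generator, so the
entropy of `ν` is the limit of `h_n`, and `h_n - h_{n+1}` is the sum over the words `w` of length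
`n` of the mutual information of the two letters surrounding `w`. For a block of zeros this mutual
information is a function of `a`; for every other `w` it is nonnegative, and zero exactly when
`p_{ε w ε'} p_w = p_{ε w} p_{w ε'}`. Since `h_0` is also determined by `a`, the entropy is largest
exactly when all these relations hold, and by induction on the length they determine `p`.

They hold for a stationary renewal process whose renewals are the ones: a word is a sequence of
runs of zeros, and `a_n - a_{n+1}` is the mass of a renewal followed by at least `n` zeros. -/

/-! ### Mutual information -/

section MutualInformation

open Real Finset InformationTheory

variable {α β : Type*} [Fintype α] [Fintype β]

/-- The mutual information `H(row) + H(column) - H(row, column)` of a finite matrix of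
nonnegative masses. The last term makes it homogeneous, so that the total mass need not be one. -/
noncomputable def mutualInfo (x : α → β → ℝ) : ℝ :=
  ∑ a, negMulLog (∑ b, x a b) + ∑ b, negMulLog (∑ a, x a b)
    - ∑ a, ∑ b, negMulLog (x a b) - negMulLog (∑ a, ∑ b, x a b)

theorem mul_klFun_div_eq {x r c t : ℝ} (hx : 0 ≤ x) (hr : x ≤ r) (hc : x ≤ c) (ht : x ≤ t) :
    r * c / t * klFun (x / (r * c / t)) =
      r * c / t - x + x * log x - x * log r - x * log c + x * log t := by
  rcases hx.eq_or_lt with rfl | hx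
  · simp [klFun_zero]
  · have hr : 0 < r := hx.trans_le hr
    have hc : 0 < c := hx.trans_le hc
    have ht : 0 < t := hx.trans_le ht
    rw [klFun, log_div hx.ne' (by positivity), log_div (by positivity) ht.ne',
      log_mul hr.ne' hc.ne']
    field_simp
    ring

theorem mul_klFun_div_eq_zero_iff {x r c t : ℝ} (hx : 0 ≤ x) (hr : x ≤ r) (hc : x ≤ c)
    (hrt : r ≤ t) : r * c / t * klFun (x / (r * c / t)) = 0 ↔ x * t = r * c := by
  have hr0 : 0 ≤ r := hx.trans hr
  have hc0 : 0 ≤ c := hx.trans hc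
  rcases (hr0.trans hrt).eq_or_lt with rfl | ht
  · obtain rfl : r = 0 := hrt.antisymm hr0
    simp
  rcases (show 0 ≤ r * c / t by positivity).eq_or_lt with h0 | h0
  · have hrc : r * c = 0 := by simpa [ht.ne'] using h0.symm
    have hx0 : x = 0 := by
      rcases mul_eq_zero.1 hrc with rfl | rfl
      exacts [hr.antisymm hx, hc.antisymm hx]
    simp [hrc, hx0]
  · rw [mul_eq_zero, or_iff_right h0.ne', klFun_eq_zero_iff (by positivity),
      div_eq_one_iff_eq h0.ne', eq_div_iff ht.ne']

variable {x : α → β → ℝ}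

theorem mutualInfo_eq_sum_klFun (hx : ∀ a b, 0 ≤ x a b) :
    mutualInfo x = ∑ a, ∑ b, (∑ b', x a b') * (∑ a', x a' b) / (∑ a', ∑ b', x a' b') *
      klFun (x a b / ((∑ b', x a b') * (∑ a', x a' b) / ∑ a', ∑ b', x a' b')) := by
  have hr a b : x a b ≤ ∑ b', x a b' := single_le_sum (fun b' _ => hx a b') (Finset.mem_univ b)
  have hc a b : x a b ≤ ∑ a', x a' b :=
    single_le_sum (f := fun a' => x a' b) (fun a' _ => hx a' b) (Finset.mem_univ a)
  have ht a b : x a b ≤ ∑ a', ∑ b', x a' b' := (hr a b).trans <|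
    single_le_sum (f := fun a' => ∑ b', x a' b')
      (fun a' _ => sum_nonneg fun b' _ => hx a' b') (Finset.mem_univ a)
  have hprod : ∑ a, ∑ b, (∑ b', x a b') * (∑ a', x a' b) / (∑ a', ∑ b', x a' b')
      = ∑ a, ∑ b, x a b := by
    simp_rw [← sum_div, ← mul_sum, ← sum_mul]
    rw [sum_comm (f := fun b a => x a b), mul_self_div_self]
  have hcol : ∑ a, ∑ b, x a b * log (∑ a', x a' b)
      = ∑ b, (∑ a, x a b) * log (∑ a', x a' b) := by
    rw [sum_comm]
    simp only [sum_mul]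
  simp_rw [mul_klFun_div_eq (hx _ _) (hr _ _) (hc _ _) (ht _ _), sum_add_distrib,
    sum_sub_distrib, sum_add_distrib, sum_sub_distrib, hprod, hcol, ← sum_mul, mutualInfo,
    negMulLog, neg_mul, sum_neg_distrib]
  ring

theorem mul_klFun_div_nonneg {y m : ℝ} (hy : 0 ≤ y) (hm : 0 ≤ m) : 0 ≤ m * klFun (y / m) :=
  mul_nonneg hm (klFun_nonneg (div_nonneg hy hm))

theorem independentMass_nonneg (hx : ∀ a b, 0 ≤ x a b) (a : α) (b : β) :
    0 ≤ (∑ b', x a b') * (∑ a', x a' b) / ∑ a', ∑ b', x a' b' :=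
  div_nonneg (mul_nonneg (sum_nonneg fun _ _ => hx _ _) (sum_nonneg fun _ _ => hx _ _))
    (sum_nonneg fun _ _ => sum_nonneg fun _ _ => hx _ _)

theorem mutualInfo_nonneg (hx : ∀ a b, 0 ≤ x a b) : 0 ≤ mutualInfo x := by
  rw [mutualInfo_eq_sum_klFun hx]
  exact sum_nonneg fun a _ => sum_nonneg fun b _ =>
    mul_klFun_div_nonneg (hx a b) (independentMass_nonneg hx a b)

theorem mutualInfo_eq_zero_iff (hx : ∀ a b, 0 ≤ x a b) :
    mutualInfo x = 0 ↔
      ∀ a b, x a b * ∑ a', ∑ b', x a' b' = (∑ b', x a b') * ∑ a', x a' b := by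
  have hterm a b := mul_klFun_div_nonneg (hx a b) (independentMass_nonneg hx a b)
  rw [mutualInfo_eq_sum_klFun hx,
    sum_eq_zero_iff_of_nonneg fun a _ => sum_nonneg fun b _ => hterm a b]
  simp only [sum_eq_zero_iff_of_nonneg fun b _ => hterm _ b, Finset.mem_univ, true_imp_iff]
  exact forall₂_congr fun a b => mul_klFun_div_eq_zero_iff (hx a b)
    (single_le_sum (fun b' _ => hx a b') (Finset.mem_univ b))
    (single_le_sum (f := fun a' => x a' b) (fun a' _ => hx a' b) (Finset.mem_univ a))
    (single_le_sum (f := fun a' => ∑ b', x a' b')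
      (fun a' _ => sum_nonneg fun b' _ => hx a' b') (Finset.mem_univ a))

theorem negMulLog_sum_le {ι : Type*} (s : Finset ι) {f : ι → ℝ} (hf : ∀ i ∈ s, 0 ≤ f i) :
    negMulLog (∑ i ∈ s, f i) ≤ ∑ i ∈ s, negMulLog (f i) := by
  rw [negMulLog, ← sum_neg_distrib, sum_mul]
  refine sum_le_sum fun i hi => ?_
  rcases (hf i hi).eq_or_lt with h | h
  · simp [← h]
  · rw [negMulLog, neg_mul, neg_mul, neg_le_neg_iff]
    exact mul_le_mul_of_nonneg_left (log_le_log h (single_le_sum hf hi)) h.le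

end MutualInformation

/-! ### Weights on words -/

section WordWeights

open Real Finset

variable {α : Type*}

/-- The letters before and after an occurrence of `w` are conditionally independent. -/
def IsMarkovAt (p : List α → ℝ) (w : List α) : Prop :=
  ∀ e e', p (e :: (w ++ [e'])) * p w = p (e :: w) * p (w ++ [e'])

/-- The joint masses of `w` and its two surrounding letters are the same for `p` and `q`, for
every `w ∈ E`. -/
def AgreeAround (E : Set (List α)) (p q : List α → ℝ) : Prop :=
  ∀ w ∈ E, ∀ e e', p (e :: (w ++ [e'])) = q (e :: (w ++ [e']))

variable [Fintype α]

/-- Masses of the words over `α` which are consistent under extension on the right, as are the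
cylinder masses of a probability measure on `ℕ → α`. -/
structure IsConsistentWeight (p : List α → ℝ) : Prop where
  nonneg : ∀ w, 0 ≤ p w
  nil : p [] = 1
  sum_append : ∀ w, ∑ e, p (w ++ [e]) = p w

/-- Consistent masses which are also consistent under extension on the left, as are the cylinder
masses of a shift-invariant probability measure. -/
structure IsStationaryWeight (p : List α → ℝ) : Prop extends IsConsistentWeight p where
  sum_cons : ∀ w, ∑ e, p (e :: w) = p w

/-- The Shannon entropy of the masses of the words of length `n`. -/
noncomputable def wordEntropy (p : List α → ℝ) (n : ℕ) : ℝ :=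
  ∑ v : Fin n → α, negMulLog (p (List.ofFn v))

/-- The entropy of a letter conditional on the `n` preceding ones. -/
noncomputable def entropyStep (p : List α → ℝ) (n : ℕ) : ℝ :=
  wordEntropy p (n + 1) - wordEntropy p n

/-- The entropy per letter, as the infimum (and, for stationary masses, the limit) of the
conditional entropies. -/
noncomputable def entropyRate (p : List α → ℝ) : ℝ :=
  ⨅ n, entropyStep p n

/-- The mutual information of the two letters surrounding an occurrence of `w`. -/
noncomputable def wordMutualInfo (p : List α → ℝ) (w : List α) : ℝ :=
  mutualInfo fun e e' => p (e :: (w ++ [e']))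

theorem sum_ofFn_succ {M : Type*} [AddCommMonoid M] (n : ℕ) (F : List α → M) :
    ∑ v : Fin (n + 1) → α, F (List.ofFn v) = ∑ v : Fin n → α, ∑ e, F (e :: List.ofFn v) := by
  rw [sum_comm, ← Fintype.sum_prod_type']
  refine (Fintype.sum_equiv (Fin.consEquiv fun _ => α) _ _ fun v => ?_).symm
  simp [Fin.consEquiv]

theorem sum_ofFn_succ' {M : Type*} [AddCommMonoid M] (n : ℕ) (F : List α → M) :
    ∑ v : Fin (n + 1) → α, F (List.ofFn v) = ∑ v : Fin n → α, ∑ e, F (List.ofFn v ++ [e]) := by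
  rw [sum_comm, ← Fintype.sum_prod_type']
  refine (Fintype.sum_equiv (Fin.snocEquiv fun _ => α) _ _ fun v => ?_).symm
  simp only [Fin.snocEquiv, Equiv.coe_fn_mk, List.ofFn_succ', Fin.snoc_castSucc, Fin.snoc_last,
    List.concat_eq_append]

variable {p q : List α → ℝ}

namespace IsConsistentWeight

theorem append_singleton_le (hp : IsConsistentWeight p) (w : List α) (e : α) :
    p (w ++ [e]) ≤ p w :=
  (single_le_sum (f := fun e => p (w ++ [e])) (fun _ _ => hp.nonneg _)
    (Finset.mem_univ e)).trans_eq (hp.sum_append w)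

theorem wordEntropy_zero (hp : IsConsistentWeight p) : wordEntropy p 0 = 0 := by
  simp [wordEntropy, hp.nil]

theorem sum_entropyStep (hp : IsConsistentWeight p) (n : ℕ) :
    ∑ i ∈ range n, entropyStep p i = wordEntropy p n := by
  simp only [entropyStep, sum_range_sub, hp.wordEntropy_zero, sub_zero]

theorem entropyStep_nonneg (hp : IsConsistentWeight p) (n : ℕ) : 0 ≤ entropyStep p n := by
  rw [entropyStep, wordEntropy, wordEntropy, sum_ofFn_succ' n fun w => negMulLog (p w),
    ← sum_sub_distrib]
  refine sum_nonneg fun v _ => sub_nonneg.2 ?_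
  rw [← hp.sum_append (List.ofFn v)]
  exact negMulLog_sum_le _ fun _ _ => hp.nonneg _

theorem entropyRate_nonneg (hp : IsConsistentWeight p) : 0 ≤ entropyRate p :=
  Real.iInf_nonneg hp.entropyStep_nonneg

theorem wordMutualInfo_nonneg (hp : IsConsistentWeight p) (w : List α) :
    0 ≤ wordMutualInfo p w :=
  mutualInfo_nonneg fun _ _ => hp.nonneg _

end IsConsistentWeight

namespace IsStationaryWeight

theorem cons_le (hp : IsStationaryWeight p) (e : α) (w : List α) : p (e :: w) ≤ p w :=
  (single_le_sum (f := fun e => p (e :: w)) (fun _ _ => hp.nonneg _)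
    (Finset.mem_univ e)).trans_eq (hp.sum_cons w)

theorem wordMutualInfo_eq (hp : IsStationaryWeight p) (w : List α) :
    wordMutualInfo p w = ∑ e, negMulLog (p (e :: w)) + ∑ e', negMulLog (p (w ++ [e']))
      - ∑ e, ∑ e', negMulLog (p (e :: (w ++ [e']))) - negMulLog (p w) := by
  simp only [wordMutualInfo, mutualInfo, ← List.cons_append, hp.sum_append]
  simp only [List.cons_append, hp.sum_cons]

theorem wordMutualInfo_eq_zero_iff (hp : IsStationaryWeight p) {w : List α} :
    wordMutualInfo p w = 0 ↔ IsMarkovAt p w := by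
  rw [wordMutualInfo, mutualInfo_eq_zero_iff fun _ _ => hp.nonneg _, IsMarkovAt]
  simp only [← List.cons_append, hp.sum_append]
  simp only [List.cons_append, hp.sum_cons]

theorem entropyStep_sub_succ (hp : IsStationaryWeight p) (n : ℕ) :
    entropyStep p n - entropyStep p (n + 1) =
      ∑ v : Fin n → α, wordMutualInfo p (List.ofFn v) := by
  have hcons := sum_ofFn_succ n fun w => negMulLog (p w)
  have happend := sum_ofFn_succ' n fun w => negMulLog (p w)
  have hboth : ∑ v : Fin (n + 2) → α, negMulLog (p (List.ofFn v))
      = ∑ v : Fin n → α, ∑ e, ∑ e', negMulLog (p (e :: (List.ofFn v ++ [e']))) := by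
    rw [sum_ofFn_succ (n + 1) fun w => negMulLog (p w),
      sum_ofFn_succ' n fun w => ∑ e, negMulLog (p (e :: w))]
    exact sum_congr rfl fun v _ => sum_comm
  simp only [hp.wordMutualInfo_eq, sum_sub_distrib, sum_add_distrib]
  rw [← hcons, ← happend, ← hboth]
  simp only [entropyStep, wordEntropy]
  ring

theorem antitone_entropyStep (hp : IsStationaryWeight p) : Antitone (entropyStep p) := by
  refine antitone_nat_of_succ_le fun n => sub_nonneg.1 ?_
  rw [hp.entropyStep_sub_succ]
  exact sum_nonneg fun v _ => hp.wordMutualInfo_nonneg _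

theorem tendsto_entropyStep (hp : IsStationaryWeight p) :
    Tendsto (entropyStep p) atTop (𝓝 (entropyRate p)) :=
  tendsto_atTop_ciInf hp.antitone_entropyStep ⟨0, Set.forall_mem_range.2 hp.entropyStep_nonneg⟩

theorem tendsto_wordEntropy_div (hp : IsStationaryWeight p) :
    Tendsto (fun n : ℕ => wordEntropy p n / n) atTop (𝓝 (entropyRate p)) :=
  hp.tendsto_entropyStep.cesaro.congr fun n => by rw [hp.sum_entropyStep, div_eq_inv_mul]

theorem monotone_entropyStep_sub (hp : IsStationaryWeight p) (hq : IsStationaryWeight q)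
    (h : ∀ w, wordMutualInfo q w ≤ wordMutualInfo p w) :
    Monotone fun n => entropyStep q n - entropyStep p n := by
  refine monotone_nat_of_le_succ fun n => ?_
  have := sum_le_sum fun (v : Fin n → α) (_ : v ∈ Finset.univ) => h (List.ofFn v)
  rw [← hp.entropyStep_sub_succ, ← hq.entropyStep_sub_succ] at this
  linarith

theorem entropyRate_le_of_wordMutualInfo_le (hp : IsStationaryWeight p)
    (hq : IsStationaryWeight q) (h0 : entropyStep p 0 = entropyStep q 0)
    (h : ∀ w, wordMutualInfo q w ≤ wordMutualInfo p w) : entropyRate p ≤ entropyRate q := by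
  refine le_of_tendsto_of_tendsto' hp.tendsto_entropyStep hq.tendsto_entropyStep fun n => ?_
  have := hp.monotone_entropyStep_sub hq h n.zero_le
  dsimp only at this
  linarith

theorem wordMutualInfo_eq_of_entropyRate_eq (hp : IsStationaryWeight p)
    (hq : IsStationaryWeight q) (h0 : entropyStep p 0 = entropyStep q 0)
    (h : ∀ w, wordMutualInfo q w ≤ wordMutualInfo p w) (heq : entropyRate p = entropyRate q)
    (w : List α) : wordMutualInfo p w = wordMutualInfo q w := by
  have hmono := hp.monotone_entropyStep_sub hq h
  have hlim := hq.tendsto_entropyStep.sub hp.tendsto_entropyStep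
  rw [heq, sub_self] at hlim
  have hstep n : entropyStep q n = entropyStep p n := by
    refine sub_eq_zero.1 (le_antisymm (hmono.ge_of_tendsto hlim n) ?_)
    exact (sub_eq_zero.2 h0.symm).ge.trans (hmono n.zero_le)
  have hsum : ∑ v : Fin w.length → α, wordMutualInfo q (List.ofFn v)
      = ∑ v : Fin w.length → α, wordMutualInfo p (List.ofFn v) := by
    rw [← hp.entropyStep_sub_succ, ← hq.entropyStep_sub_succ, hstep, hstep]
  have hw := (sum_eq_sum_iff_of_le fun v _ => h (List.ofFn v)).1 hsum w.get (Finset.mem_univ _)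
  rw [List.ofFn_get] at hw
  exact hw.symm

end IsStationaryWeight

section MarkovOffBoundary

variable {E : Set (List α)}

theorem entropyStep_zero_congr (hp : IsStationaryWeight p) (hq : IsStationaryWeight q)
    (h : ∀ e e', p [e, e'] = q [e, e']) : entropyStep p 0 = entropyStep q 0 := by
  have hletter e : p [e] = q [e] := by
    rw [← hp.sum_append, ← hq.sum_append]
    exact sum_congr rfl fun e' _ => h e e'
  simp only [entropyStep, wordEntropy, Fintype.sum_unique, sum_ofFn_succ 0 fun w => negMulLog (p w),
    sum_ofFn_succ 0 fun w => negMulLog (q w), List.ofFn_zero, hletter, hp.nil, hq.nil]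

theorem wordMutualInfo_le_of_isMarkovAt (hp : IsStationaryWeight p) (hq : IsStationaryWeight q)
    (hE : AgreeAround E p q) (hqE : ∀ w ∉ E, IsMarkovAt q w) (w : List α) :
    wordMutualInfo q w ≤ wordMutualInfo p w := by
  by_cases hw : w ∈ E
  · simp only [wordMutualInfo, hE w hw, le_refl]
  · rw [hq.wordMutualInfo_eq_zero_iff.2 (hqE w hw)]
    exact hp.wordMutualInfo_nonneg w

theorem entropyRate_le_of_isMarkovAt (hp : IsStationaryWeight p) (hq : IsStationaryWeight q)
    (hnil : [] ∈ E) (hE : AgreeAround E p q) (hqE : ∀ w ∉ E, IsMarkovAt q w) :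
    entropyRate p ≤ entropyRate q :=
  hp.entropyRate_le_of_wordMutualInfo_le hq (entropyStep_zero_congr hp hq (hE [] hnil))
    (wordMutualInfo_le_of_isMarkovAt hp hq hE hqE)

theorem isMarkovAt_of_entropyRate_eq (hp : IsStationaryWeight p) (hq : IsStationaryWeight q)
    (hnil : [] ∈ E) (hE : AgreeAround E p q) (hqE : ∀ w ∉ E, IsMarkovAt q w)
    (heq : entropyRate p = entropyRate q) :
    ∀ w ∉ E, IsMarkovAt p w := by
  intro w hw
  rw [← hp.wordMutualInfo_eq_zero_iff, hp.wordMutualInfo_eq_of_entropyRate_eq hq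
    (entropyStep_zero_congr hp hq (hE [] hnil)) (wordMutualInfo_le_of_isMarkovAt hp hq hE hqE) heq,
    hq.wordMutualInfo_eq_zero_iff]
  exact hqE w hw

theorem IsStationaryWeight.eq_zero_of_inner_eq_zero (hp : IsStationaryWeight p) {w : List α}
    (hw : p w = 0) (e e' : α) : p (e :: (w ++ [e'])) = 0 :=
  le_antisymm (((hp.cons_le e _).trans (hp.append_singleton_le w e')).trans_eq hw) (hp.nonneg _)

theorem eq_of_isMarkovAt (hp : IsStationaryWeight p) (hq : IsStationaryWeight q)
    (hnil : [] ∈ E) (hE : AgreeAround E p q) (hpE : ∀ w ∉ E, IsMarkovAt p w)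
    (hqE : ∀ w ∉ E, IsMarkovAt q w) (w : List α) : p w = q w := by
  induction hn : w.length using Nat.strong_induction_on generalizing w with
  | _ n ih =>
    subst hn
    rcases w with _ | ⟨e, u⟩
    · rw [hp.nil, hq.nil]
    rcases u.eq_nil_or_concat with rfl | ⟨m, e', rfl⟩
    · rw [← hp.sum_append, ← hq.sum_append]
      exact sum_congr rfl fun e' _ => hE [] hnil e e'
    rw [List.concat_eq_append]
    by_cases hm : m ∈ E
    · exact hE m hm e e'
    have hmid : p m = q m := ih m.length (by simp) m rfl
    have hleft : p (e :: m) = q (e :: m) := ih (e :: m).length (by simp) _ rfl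
    have hright : p (m ++ [e']) = q (m ++ [e']) := ih (m ++ [e']).length (by simp) _ rfl
    by_cases hz : p m = 0
    · rw [hp.eq_zero_of_inner_eq_zero hz, hq.eq_zero_of_inner_eq_zero (hmid ▸ hz)]
    · refine mul_right_cancel₀ hz ?_
      rw [hpE m hm, hleft, hright, hmid, hqE m hm]

end MarkovOffBoundary

end WordWeights

/-! ### Entropy of random variables with finitely many values -/

section FiniteEntropy

open Real Finset

variable {Ω α β γ : Type*} [MeasurableSpace Ω] {μ : Measure Ω}

/-- The Shannon entropy `H(f)` of a random variable with finitely many values. -/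
noncomputable def shannonEntropy [Fintype α] (μ : Measure Ω) (f : Ω → α) : ℝ :=
  ∑ a, negMulLog (μ.real (f ⁻¹' {a}))

/-- The conditional Shannon entropy `H(f | g) = H(f, g) - H(g)`. -/
noncomputable def condEntropy [Fintype α] [Fintype β] (μ : Measure Ω) (f : Ω → α) (g : Ω → β) :
    ℝ :=
  shannonEntropy μ (fun ω => (f ω, g ω)) - shannonEntropy μ g

variable [Fintype α] [MeasurableSpace α] [MeasurableSingletonClass α]
  [Fintype β] [MeasurableSpace β] [MeasurableSingletonClass β]
  [Fintype γ]

section FiniteMeasure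

variable [IsFiniteMeasure μ]

theorem sum_measureReal_preimage_singleton_inter {f : Ω → α} (hf : Measurable f) (s : Set Ω) :
    ∑ a, μ.real (f ⁻¹' {a} ∩ s) = μ.real s := by
  have h := sum_measureReal_preimage_singleton (μ := μ.restrict s) (f := f) Finset.univ
    fun a _ => hf (measurableSet_singleton a)
  simpa only [measureReal_restrict_apply (hf (measurableSet_singleton _)), coe_univ,
    preimage_univ, measureReal_restrict_apply_univ] using h

theorem shannonEntropy_comp_le {f : Ω → α} (hf : Measurable f) (φ : α → γ) :
    shannonEntropy μ (fun ω => φ (f ω)) ≤ shannonEntropy μ f := by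
  classical
  have hfiber c : μ.real ((fun ω => φ (f ω)) ⁻¹' {c}) = ∑ a with φ a = c, μ.real (f ⁻¹' {a}) := by
    rw [sum_measureReal_preimage_singleton _ fun a _ => hf (measurableSet_singleton a)]
    congr 1
    ext ω
    simp
  simp only [shannonEntropy, hfiber]
  rw [← sum_fiberwise Finset.univ φ fun a => negMulLog (μ.real (f ⁻¹' {a}))]
  exact sum_le_sum fun c _ => negMulLog_sum_le _ fun _ _ => measureReal_nonneg

theorem condEntropy_prod_le {f : Ω → α} {g : Ω → β} {h : Ω → γ} (hf : Measurable f)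
    (hg : Measurable g) :
    condEntropy μ f (fun ω => (g ω, h ω)) ≤ condEntropy μ f h := by
  set x : γ → α → β → ℝ := fun c a b => μ.real (f ⁻¹' {a} ∩ (g ⁻¹' {b} ∩ h ⁻¹' {c}))
  have hrow c a : ∑ b, x c a b = μ.real (f ⁻¹' {a} ∩ h ⁻¹' {c}) := by
    simp only [x, inter_left_comm (f ⁻¹' _), sum_measureReal_preimage_singleton_inter hg]
  have hcol c b : ∑ a, x c a b = μ.real (g ⁻¹' {b} ∩ h ⁻¹' {c}) :=
    sum_measureReal_preimage_singleton_inter hf _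
  have hnonneg : 0 ≤ ∑ c, mutualInfo (x c) :=
    sum_nonneg fun c _ => mutualInfo_nonneg fun _ _ => measureReal_nonneg
  have hjoint : ∑ c, ∑ a, ∑ b, negMulLog (x c a b)
      = ∑ a, ∑ b, ∑ c, negMulLog (x c a b) := by
    rw [sum_comm]
    exact sum_congr rfl fun a _ => sum_comm
  simp only [mutualInfo, sum_sub_distrib, sum_add_distrib, hrow, hcol, hjoint,
    sum_measureReal_preimage_singleton_inter hf] at hnonneg
  rw [sum_comm, sum_comm (f := fun c b ↦ negMulLog (μ.real (g ⁻¹' {b} ∩ h ⁻¹' {c})))] at hnonneg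
  simp only [condEntropy, shannonEntropy, Fintype.sum_prod_type, ← Set.singleton_prod_singleton,
    Set.mk_preimage_prod]
  linarith

theorem condEntropy_comp_le {f : Ω → α} {g : Ω → β} (hf : Measurable f) (hg : Measurable g)
    (φ : α → β → γ) : condEntropy μ (fun ω => φ (f ω) (g ω)) g ≤ condEntropy μ f g :=
  sub_le_sub_right (shannonEntropy_comp_le (hf.prodMk hg) fun y => (φ y.1 y.2, y.2)) _

variable [MeasurableSpace γ] [MeasurableSingletonClass γ]

theorem condEntropy_le_comp {f : Ω → α} {g : Ω → β} (hf : Measurable f) (hg : Measurable g)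
    (φ : β → γ) : condEntropy μ f g ≤ condEntropy μ f (fun ω => φ (g ω)) := by
  have hφ : Measurable fun ω => φ (g ω) := (Measurable.of_discrete (f := φ)).comp hg
  have hdrop := shannonEntropy_comp_le (μ := μ) (hf.prodMk (hg.prodMk hφ)) fun y => (y.1, y.2.1)
  have hpair := shannonEntropy_comp_le (μ := μ) hg fun b => (b, φ b)
  refine le_trans ?_ (condEntropy_prod_le hf hg)
  simp only [condEntropy]
  linarith

theorem condEntropy_prodMk_le {f : Ω → α} {g : Ω → β} {h : Ω → γ} (hf : Measurable f)
    (hg : Measurable g) (hh : Measurable h) :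
    condEntropy μ (fun ω => (f ω, g ω)) h ≤ condEntropy μ f h + condEntropy μ g h := by
  have hassoc := shannonEntropy_comp_le (μ := μ) (hf.prodMk (hg.prodMk hh))
    fun y => ((y.1, y.2.1), y.2.2)
  have hprod := condEntropy_prod_le (μ := μ) (h := h) hf hg
  simp only [condEntropy] at hprod ⊢
  linarith

theorem condEntropy_pi_le {n : ℕ} {f : Fin n → Ω → α} {g : Ω → β} (hf : ∀ i, Measurable (f i))
    (hg : Measurable g) :
    condEntropy μ (fun ω i => f i ω) g ≤ ∑ i, condEntropy μ (f i) g := by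
  induction n with
  | zero =>
    have h := shannonEntropy_comp_le (μ := μ) hg fun b => ((Fin.elim0 : Fin 0 → α), b)
    simpa [condEntropy, Subsingleton.elim _ (Fin.elim0 : Fin 0 → α)] using h
  | succ n ih =>
    have htail : Measurable fun ω (i : Fin n) => f i.succ ω :=
      measurable_pi_iff.2 fun i => hf i.succ
    have hcons ω : (fun i => f i ω) = (Fin.cons (f 0 ω) fun i => f i.succ ω : Fin (n + 1) → α) :=
      (Fin.cons_self_tail _).symm
    calc condEntropy μ (fun ω i => f i ω) g
      _ ≤ condEntropy μ (fun ω => (f 0 ω, fun i : Fin n => f i.succ ω)) g := by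
        rw [funext hcons]
        exact condEntropy_comp_le ((hf 0).prodMk htail) hg
          fun y _ => (Fin.cons y.1 y.2 : Fin (n + 1) → α)
      _ ≤ condEntropy μ (f 0) g + condEntropy μ (fun ω (i : Fin n) => f i.succ ω) g :=
        condEntropy_prodMk_le (hf 0) htail hg
      _ ≤ ∑ i, condEntropy μ (f i) g := by
        rw [Fin.sum_univ_succ]
        exact add_le_add_right (ih fun i => hf i.succ) _

theorem condEntropy_le_sum_decide [DecidableEq α] {f : Ω → α} {g : Ω → β} (hf : Measurable f)
    (hg : Measurable g) :
    condEntropy μ f g ≤ ∑ a, condEntropy μ (fun ω => decide (f ω = a)) g := by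
  rcases isEmpty_or_nonempty α with hα | hα
  · have := f.isEmpty
    simp [condEntropy, shannonEntropy, Set.eq_empty_of_isEmpty]
  set e := Fintype.equivFin α
  set code : α → Fin (Fintype.card α) → Bool := fun a i => decide (a = e.symm i)
  have hcode : Function.Injective code := fun a b h => by simpa [code] using congrFun h (e b)
  have hmeas a : Measurable fun ω => decide (f ω = a) :=
    (Measurable.of_discrete (f := fun b => decide (b = a))).comp hf
  calc condEntropy μ f g
    _ = condEntropy μ (fun ω => code.invFun (code (f ω))) g := by
      simp only [Function.leftInverse_invFun hcode _]
    _ ≤ condEntropy μ (fun ω => code (f ω)) g :=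
      condEntropy_comp_le (measurable_pi_iff.2 fun i => hmeas _) hg fun v _ => code.invFun v
    _ ≤ ∑ i, condEntropy μ (fun ω => decide (f ω = e.symm i)) g :=
      condEntropy_pi_le (fun i => hmeas _) hg
    _ = ∑ a, condEntropy μ (fun ω => decide (f ω = a)) g :=
      e.symm.sum_comp fun a => condEntropy μ (fun ω => decide (f ω = a)) g

end FiniteMeasure

theorem shannonEntropy_comp_measurePreserving {Ω' : Type*} [MeasurableSpace Ω']
    {ν : Measure Ω'} {T : Ω → Ω'} (hT : MeasurePreserving T μ ν) {f : Ω' → α} (hf : Measurable f) :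
    shannonEntropy μ (fun ω => f (T ω)) = shannonEntropy ν f :=
  sum_congr rfl fun a _ => congrArg negMulLog <|
    hT.measureReal_preimage (hf (measurableSet_singleton a)).nullMeasurableSet

theorem condEntropy_comp_measurePreserving {Ω' : Type*} [MeasurableSpace Ω']
    {ν : Measure Ω'} {T : Ω → Ω'} (hT : MeasurePreserving T μ ν) {f : Ω' → α} {g : Ω' → β}
    (hf : Measurable f) (hg : Measurable g) :
    condEntropy μ (fun ω => f (T ω)) (fun ω => g (T ω)) = condEntropy ν f g := by
  rw [condEntropy, condEntropy, shannonEntropy_comp_measurePreserving hT hg,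
    shannonEntropy_comp_measurePreserving hT (hf.prodMk hg)]

section ProbabilityMeasure

variable [IsProbabilityMeasure μ]

theorem condEntropy_le_shannonEntropy {f : Ω → α} {g : Ω → β} (hf : Measurable f)
    (hg : Measurable g) : condEntropy μ f g ≤ shannonEntropy μ f := by
  have htrivial : shannonEntropy μ (fun _ : Ω => ()) = 0 := by simp [shannonEntropy]
  refine (condEntropy_le_comp hf hg fun _ => ()).trans ?_
  rw [condEntropy, htrivial, sub_zero]
  exact shannonEntropy_comp_le hf fun a => (a, ())

theorem shannonEntropy_bool {f : Ω → Bool} (hf : Measurable f) :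
    shannonEntropy μ f = binEntropy (μ.real (f ⁻¹' {true})) := by
  have h : μ.real (f ⁻¹' {false}) = 1 - μ.real (f ⁻¹' {true}) := by
    rw [← probReal_compl_eq_one_sub (hf (measurableSet_singleton true)), ← preimage_compl]
    congr 2
    ext b
    simp
  rw [shannonEntropy, Fintype.sum_bool, h, binEntropy_eq_negMulLog_add_negMulLog_one_sub]

open Classical in
theorem condEntropy_mem_le_binEntropy {s : Set Ω} (hs : MeasurableSet s) {g : Ω → β}
    (hg : Measurable g) (S : Set β) :
    condEntropy μ (fun ω => decide (ω ∈ s)) g ≤ binEntropy (μ.real (symmDiff s (g ⁻¹' S))) := by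
  set error : Ω → Bool := fun ω => decide (ω ∈ symmDiff s (g ⁻¹' S))
  have hpre : error ⁻¹' {true} = symmDiff s (g ⁻¹' S) := by ext ω; simp [error]
  have herror : Measurable error :=
    measurable_to_bool (hpre ▸ hs.symmDiff (hg (MeasurableSet.of_discrete)))
  have hcorrect : (fun ω => decide (ω ∈ s)) = fun ω => xor (error ω) (decide (g ω ∈ S)) := by
    funext ω
    by_cases h₁ : ω ∈ s <;> by_cases h₂ : g ω ∈ S <;> simp [error, Set.mem_symmDiff, h₁, h₂]
  rw [← hpre, ← shannonEntropy_bool herror, hcorrect]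
  exact (condEntropy_comp_le herror hg fun b y => xor b (decide (y ∈ S))).trans
    (condEntropy_le_shannonEntropy herror hg)

end ProbabilityMeasure

end FiniteEntropy

/-! ### Generators and the Kolmogorov–Sinai entropy -/

section KolmogorovSinai

open Real Finset

variable {Ω α β : Type*} {T : Ω → Ω} {g : Ω → α} {f : Ω → β}

/-- The labels `g x, g (T x), …, g (Tⁿ⁻¹ x)` of an orbit segment of length `n`. -/
def itinerary (T : Ω → Ω) (g : Ω → α) (n : ℕ) (x : Ω) : Fin n → α :=
  fun i => g (T^[i] x)

/-- The events depending on a finite itinerary, i.e. the algebra of finite unions of atoms of the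
partitions `g ∨ T⁻¹g ∨ ⋯ ∨ T⁻⁽ⁿ⁻¹⁾g`. -/
def itinerarySets (T : Ω → Ω) (g : Ω → α) : Set (Set Ω) :=
  {s | ∃ n, ∃ S : Set (Fin n → α), itinerary T g n ⁻¹' S = s}

/-- The partition into fibres of `g` is a (one-sided) generator: the itineraries of finite length
generate the σ-algebra exactly, not only up to null sets. -/
def IsGenerator [mΩ : MeasurableSpace Ω] (T : Ω → Ω) (g : Ω → α) : Prop :=
  mΩ = MeasurableSpace.generateFrom (itinerarySets T g)

theorem itinerary_iterate {i m n : ℕ} (h : i + m ≤ n) (x : Ω) :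
    itinerary T g m (T^[i] x) = fun j : Fin m => itinerary T g n x ⟨i + j, by omega⟩ :=
  funext fun j => by simp only [itinerary, ← Function.iterate_add_apply, add_comm]

theorem exists_preimage_itinerary_eq {m n : ℕ} (h : m ≤ n) (S : Set (Fin m → α)) :
    ∃ S' : Set (Fin n → α), itinerary T g n ⁻¹' S' = itinerary T g m ⁻¹' S :=
  ⟨(fun v i => v (Fin.castLE h i)) ⁻¹' S, rfl⟩

theorem isSetAlgebra_itinerarySets : IsSetAlgebra (itinerarySets T g) where
  empty_mem := ⟨0, ∅, rfl⟩
  compl_mem := by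
    rintro _ ⟨n, S, rfl⟩
    exact ⟨n, Sᶜ, rfl⟩
  union_mem := by
    rintro _ _ ⟨m, S, rfl⟩ ⟨n, S', rfl⟩
    obtain ⟨R, hR⟩ := exists_preimage_itinerary_eq (T := T) (g := g) (le_max_left m n) S
    obtain ⟨R', hR'⟩ := exists_preimage_itinerary_eq (T := T) (g := g) (le_max_right m n) S'
    exact ⟨max m n, R ∪ R', by rw [preimage_union, hR, hR']⟩

variable [MeasurableSpace Ω] [MeasurableSpace α]

theorem measurable_itinerary (hT : Measurable T) (hg : Measurable g) (n : ℕ) :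
    Measurable (itinerary T g n) :=
  measurable_pi_iff.2 fun i => hg.comp (hT.iterate i)

theorem IsGenerator.measurable [Countable α] (hgen : IsGenerator T g) : Measurable g :=
  measurable_to_countable' fun a => by
    rw [hgen]
    exact MeasurableSpace.measurableSet_generateFrom ⟨1, {v | v 0 = a}, rfl⟩

variable [MeasurableSingletonClass α]

theorem IsGenerator.measure_ext [Countable α] (hgen : IsGenerator T g) (hT : Measurable T)
    {μ ν : Measure Ω} [IsFiniteMeasure μ]
    (h : ∀ n v, μ (itinerary T g n ⁻¹' {v}) = ν (itinerary T g n ⁻¹' {v})) : μ = ν := by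
  have hset {s} (hs : s ∈ itinerarySets T g) : μ s = ν s := by
    obtain ⟨n, S, rfl⟩ := hs
    have hm := measurable_itinerary hT hgen.measurable n
    have hmap : μ.map (itinerary T g n) = ν.map (itinerary T g n) :=
      Measure.ext_of_singleton fun v => by
        simpa only [Measure.map_apply hm (measurableSet_singleton v)] using h n v
    simpa only [Measure.map_apply hm MeasurableSet.of_discrete] using congrArg (· S) hmap
  have hpi : IsPiSystem (itinerarySets T g) := fun _ hs _ ht _ =>
    isSetAlgebra_itinerarySets.inter_mem hs ht
  exact ext_of_generate_finite _ hgen hpi (fun _ hs => hset hs) (hset ⟨0, univ, rfl⟩)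

section Invariant

variable [Fintype α] [Fintype β] {μ : Measure Ω} [IsProbabilityMeasure μ]

theorem partInfo_eq_shannonEntropy_itinerary {e : β → ℕ} (he : Function.Injective e) (n : ℕ) :
    partInfo T μ (fun x => e (f x)) n = ENNReal.ofReal (shannonEntropy μ (itinerary T f n)) := by
  set code : (Fin n → β) → List ℕ := fun v => List.ofFn fun i => e (v i)
  have hcode_inj : Function.Injective code := fun v w h =>
    funext fun i => he (congrFun (List.ofFn_injective h) i)
  have hcode x : ((List.range n).map fun j => e (f (T^[j] x))) = code (itinerary T f n x) := by
    simp only [code, List.ofFn_eq_map, ← List.map_coe_finRange_eq_range, List.map_map]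
    rfl
  simp only [partInfo, hcode]
  rw [← hcode_inj.tsum_eq, tsum_fintype, shannonEntropy, ENNReal.ofReal_sum_of_nonneg]
  · refine sum_congr rfl fun v _ => ?_
    have hpre : (fun x => code (itinerary T f n x)) ⁻¹' {code v} = itinerary T f n ⁻¹' {v} := by
      ext x
      simp only [Set.mem_preimage, Set.mem_singleton_iff, hcode_inj.eq_iff]
    rw [hpre, measureReal_def]
  · exact fun v _ => negMulLog_nonneg measureReal_nonneg measureReal_le_one
  · intro l hl
    by_contra hrange
    have hpre : (fun x => code (itinerary T f n x)) ⁻¹' {l} = ∅ :=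
      Set.eq_empty_of_forall_notMem fun x hx => hrange ⟨_, hx⟩
    exact hl (by simp [hpre])

variable [MeasurableSpace β] [MeasurableSingletonClass β]

/- A measurable set is approximated in measure by events depending on a finite itinerary, and its
conditional entropy given the itinerary is at most the binary entropy of the error. -/
open Classical in
theorem IsGenerator.eventually_condEntropy_mem_le (hgen : IsGenerator T g) (hT : Measurable T)
    {s : Set Ω} (hs : MeasurableSet s) {ε : ℝ} (hε : 0 < ε) :
    ∀ᶠ m in atTop, condEntropy μ (fun x => decide (x ∈ s)) (itinerary T g m) ≤ ε := by
  have hzero : Tendsto binEntropy (𝓝 0) (𝓝 0) := by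
    simpa using binEntropy_continuous.tendsto 0
  obtain ⟨δ, hδ, hbin⟩ := Metric.eventually_nhds_iff.1 (hzero.eventually_le_const hε)
  have hdense : μ.MeasureDense (itinerarySets T g) :=
    .of_generateFrom_isSetAlgebra_finite μ isSetAlgebra_itinerarySets hgen
  obtain ⟨_, ⟨n, S, rfl⟩, herror⟩ := hdense.approx s hs (measure_ne_top _ _) δ hδ
  filter_upwards [eventually_ge_atTop n] with m hnm
  obtain ⟨S', hS'⟩ := exists_preimage_itinerary_eq (T := T) (g := g) hnm S
  refine (condEntropy_mem_le_binEntropy hs (measurable_itinerary hT hgen.measurable m) S').trans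
    (hbin ?_)
  rw [hS', Real.dist_eq, sub_zero, abs_of_nonneg measureReal_nonneg]
  exact ENNReal.toReal_lt_of_lt_ofReal herror

theorem IsGenerator.eventually_condEntropy_le (hgen : IsGenerator T g) (hT : Measurable T)
    (hf : Measurable f) {ε : ℝ} (hε : 0 < ε) :
    ∀ᶠ m in atTop, condEntropy μ f (itinerary T g m) ≤ ε := by
  classical
  have hε' : 0 < ε / (Fintype.card β + 1) := by positivity
  have hfibers := eventually_all.2 fun b : β => hgen.eventually_condEntropy_mem_le (μ := μ) hT
    (hf (measurableSet_singleton b)) hε'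
  filter_upwards [hfibers] with m hm
  calc condEntropy μ f (itinerary T g m)
      ≤ ∑ b, condEntropy μ (fun x => decide (f x = b)) (itinerary T g m) :=
        condEntropy_le_sum_decide hf (measurable_itinerary hT hgen.measurable m)
    _ ≤ ∑ _b : β, ε / (Fintype.card β + 1) := sum_le_sum fun b _ => hm b
    _ ≤ ε := by
      rw [sum_const, card_univ, nsmul_eq_mul, mul_div_left_comm]
      exact mul_le_of_le_one_right hε.le (div_le_one_of_le₀ (by simp) (by positivity))

theorem shannonEntropy_itinerary_le (hT : MeasurePreserving T μ μ) (hg : Measurable g)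
    (hf : Measurable f) (m n : ℕ) :
    shannonEntropy μ (itinerary T f n) ≤ shannonEntropy μ (itinerary T g (n + m))
      + n * condEntropy μ f (itinerary T g m) := by
  have hfi (i : ℕ) : Measurable fun x => f (T^[i] x) := hf.comp (hT.measurable.iterate i)
  have hgm := measurable_itinerary hT.measurable hg
  have hstep (i : Fin n) : condEntropy μ (fun x => f (T^[i] x)) (itinerary T g (n + m))
      ≤ condEntropy μ f (itinerary T g m) := by
    rw [← condEntropy_comp_measurePreserving (hT.iterate i) hf (hgm m)]
    simp only [itinerary_iterate (show (i : ℕ) + m ≤ n + m by omega)]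
    exact condEntropy_le_comp (hfi i) (hgm _) fun v (j : Fin m) => v ⟨i + j, by omega⟩
  calc shannonEntropy μ (itinerary T f n)
      ≤ shannonEntropy μ (fun x => (itinerary T f n x, itinerary T g (n + m) x)) :=
        shannonEntropy_comp_le ((measurable_itinerary hT.measurable hf n).prodMk (hgm _)) Prod.fst
    _ = shannonEntropy μ (itinerary T g (n + m))
          + condEntropy μ (itinerary T f n) (itinerary T g (n + m)) := by rw [condEntropy]; ring
    _ ≤ shannonEntropy μ (itinerary T g (n + m))
          + ∑ _i : Fin n, condEntropy μ f (itinerary T g m) := by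
        gcongr
        exact (condEntropy_pi_le (fun i : Fin n => hfi i) (hgm _)).trans
          (sum_le_sum fun i _ => hstep i)
    _ = _ := by simp

theorem le_ksEntropy (hg : Measurable g) {h : ℝ}
    (hlim : Tendsto (fun n : ℕ => shannonEntropy μ (itinerary T g n) / n) atTop (𝓝 h)) :
    ENNReal.ofReal h ≤ ksEntropy T μ := by
  set e : α → ℕ := fun a => Fintype.equivFin α a
  have he : Function.Injective e := Fin.val_injective.comp (Fintype.equivFin α).injective
  have heg : Measurable (e ∘ g) := (Measurable.of_discrete (f := e)).comp hg
  have hfin : (range (e ∘ g)).Finite := (Set.finite_range e).subset (range_comp_subset_range g e)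
  calc ENNReal.ofReal h
      = atTop.liminf fun n : ℕ => ENNReal.ofReal (shannonEntropy μ (itinerary T g n) / n) :=
        (ENNReal.tendsto_ofReal hlim).liminf_eq.symm
    _ ≤ atTop.liminf fun n : ℕ => partInfo T μ (e ∘ g) n / n := by
        refine liminf_le_liminf ((eventually_gt_atTop 0).mono fun n hn => ?_)
        rw [Function.comp_def, partInfo_eq_shannonEntropy_itinerary he,
          ENNReal.ofReal_div_of_pos (by positivity), ENNReal.ofReal_natCast]
    _ ≤ ksEntropy T μ := le_iSup_of_le (e ∘ g) (le_iSup_of_le heg (le_iSup_of_le hfin le_rfl))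

theorem IsGenerator.liminf_partInfo_le {γ : Type*} [Finite γ] [MeasurableSpace γ]
    [MeasurableSingletonClass γ] {f : Ω → γ} (hgen : IsGenerator T g)
    (hT : MeasurePreserving T μ μ) (hf : Measurable f) {e : γ → ℕ} (he : Function.Injective e)
    {h : ℝ}
    (hlim : Tendsto (fun n : ℕ => shannonEntropy μ (itinerary T g n) / n) atTop (𝓝 h)) :
    (atTop.liminf fun n : ℕ => partInfo T μ (fun x => e (f x)) n / n) ≤ ENNReal.ofReal h := by
  have := Fintype.ofFinite γ
  refine ENNReal.le_of_forall_pos_le_add fun ε hε _ => ?_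
  obtain ⟨m, hm⟩ := (hgen.eventually_condEntropy_le (μ := μ) hT.measurable hf
    (NNReal.coe_pos.2 hε)).exists
  have hshift : Tendsto (fun n : ℕ => shannonEntropy μ (itinerary T g (n + m)) / n) atTop
      (𝓝 h) := by
    have hratio := ((tendsto_add_atTop_iff_nat m).2 hlim).div
      (tendsto_natCast_div_add_atTop (m : ℝ)) one_ne_zero
    rw [div_one] at hratio
    refine hratio.congr' ((eventually_gt_atTop 0).mono fun n hn => ?_)
    rw [Pi.div_apply, Nat.cast_add, div_div_div_cancel_right₀ (by positivity)]
  have hbound : ∀ᶠ n : ℕ in atTop, partInfo T μ (fun x => e (f x)) n / n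
      ≤ ENNReal.ofReal (shannonEntropy μ (itinerary T g (n + m)) / n + ε) := by
    filter_upwards [eventually_gt_atTop 0] with n hn
    have hn' : (0 : ℝ) < n := Nat.cast_pos.2 hn
    rw [partInfo_eq_shannonEntropy_itinerary he, ← ENNReal.ofReal_natCast n,
      ← ENNReal.ofReal_div_of_pos hn']
    refine ENNReal.ofReal_le_ofReal ?_
    rw [div_add' _ _ _ hn'.ne']
    gcongr
    grw [shannonEntropy_itinerary_le hT hgen.measurable hf m n, hm, mul_comm]
  calc (atTop.liminf fun n : ℕ => partInfo T μ (fun x => e (f x)) n / n)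
      ≤ atTop.liminf fun n : ℕ =>
          ENNReal.ofReal (shannonEntropy μ (itinerary T g (n + m)) / n + ε) :=
        liminf_le_liminf hbound
    _ = ENNReal.ofReal (h + ε) := (ENNReal.tendsto_ofReal (hshift.add_const _)).liminf_eq
    _ ≤ ENNReal.ofReal h + ε := by
        simpa only [ENNReal.ofReal_coe_nnreal] using ENNReal.ofReal_add_le (p := h) (q := ε)

theorem IsGenerator.ksEntropy_eq (hgen : IsGenerator T g) (hT : MeasurePreserving T μ μ) {h : ℝ}
    (hlim : Tendsto (fun n : ℕ => shannonEntropy μ (itinerary T g n) / n) atTop (𝓝 h)) :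
    ksEntropy T μ = ENNReal.ofReal h := by
  refine le_antisymm (iSup_le fun P => iSup_le fun hP => iSup_le fun hfin => ?_)
    (le_ksEntropy hgen.measurable hlim)
  have := hfin.to_subtype
  exact hgen.liminf_partInfo_le hT (f := rangeFactorization P) hP.rangeFactorization
    Subtype.val_injective hlim

end Invariant

end KolmogorovSinai

/-! ### Measures on sequences with prescribed cylinder masses -/

section Extension

open Finset

variable {α : Type*}

/-- The first `n` letters of a sequence. -/
def firstWord (n : ℕ) (x : ℕ → α) : Fin n → α :=
  fun i => x i

theorem measurable_firstWord [MeasurableSpace α] (n : ℕ) : Measurable (firstWord (α := α) n) :=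
  measurable_pi_iff.2 fun _ => measurable_pi_apply _

variable [Fintype α] {p : List α → ℝ}

theorem IsConsistentWeight.sum_ofFn (hp : IsConsistentWeight p) (n : ℕ) :
    ∑ v : Fin n → α, p (List.ofFn v) = 1 := by
  induction n with
  | zero => simp [hp.nil]
  | succ n ih => simp only [sum_ofFn_succ', hp.sum_append, ih]

theorem IsConsistentWeight.nonempty (hp : IsConsistentWeight p) : Nonempty α := by
  by_contra hα
  have := not_nonempty_iff.1 hα
  simpa [hp.nil] using hp.sum_append []

variable [MeasurableSpace α] [MeasurableSingletonClass α]

theorem IsConsistentWeight.exists_measure_length_eq (hp : IsConsistentWeight p) (n : ℕ) :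
    ∃ μ : ProbabilityMeasure (ℕ → α), ∀ v : Fin n → α,
      (μ : Measure (ℕ → α)).real (firstWord n ⁻¹' {v}) = p (List.ofFn v) := by
  have hsum : ∑ v : Fin n → α, ENNReal.ofReal (p (List.ofFn v)) = 1 := by
    rw [← ENNReal.ofReal_sum_of_nonneg fun _ _ => hp.nonneg _, hp.sum_ofFn, ENNReal.ofReal_one]
  obtain ⟨a⟩ := hp.nonempty
  set law : PMF (Fin n → α) := PMF.ofFintype _ hsum
  set extend : (Fin n → α) → ℕ → α := fun v i => if h : i < n then v ⟨i, h⟩ else a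
  have hextend : Measurable extend := .of_discrete
  refine ⟨⟨law.toMeasure.map extend, Measure.isProbabilityMeasure_map hextend.aemeasurable⟩,
    fun v => ?_⟩
  have hleft : extend ⁻¹' (firstWord n ⁻¹' {v}) = {v} := by
    ext u
    simp [extend, firstWord, funext_iff]
  rw [ProbabilityMeasure.coe_mk, map_measureReal_apply hextend
    (measurable_firstWord n (measurableSet_singleton v)), hleft, measureReal_def,
    PMF.toMeasure_apply_singleton _ _ (measurableSet_singleton v), PMF.ofFintype_apply,
    ENNReal.toReal_ofReal (hp.nonneg _)]

theorem IsConsistentWeight.measureReal_firstWord_of_le (hp : IsConsistentWeight p) {n : ℕ}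
    {μ : Measure (ℕ → α)} [IsFiniteMeasure μ]
    (hμ : ∀ v : Fin n → α, μ.real (firstWord n ⁻¹' {v}) = p (List.ofFn v)) {m : ℕ} (hmn : m ≤ n) :
    ∀ v : Fin m → α, μ.real (firstWord m ⁻¹' {v}) = p (List.ofFn v) := by
  refine Nat.decreasingInduction (motive := fun m _ => ∀ v : Fin m → α,
    μ.real (firstWord m ⁻¹' {v}) = p (List.ofFn v)) (fun k _ ih v => ?_) hμ hmn
  have hsplit (a : α) : (fun x : ℕ → α => x k) ⁻¹' {a} ∩ firstWord k ⁻¹' {v}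
      = firstWord (k + 1) ⁻¹' {Fin.snoc v a} := by
    ext x
    simp [firstWord, funext_iff, Fin.forall_fin_succ', and_comm]
  rw [← sum_measureReal_preimage_singleton_inter (measurable_pi_apply k), ← hp.sum_append]
  refine sum_congr rfl fun a _ => ?_
  rw [hsplit, ih, List.ofFn_succ']
  simp

/-- Kolmogorov extension, by compactness of the space of probability measures on `ℕ → α`. -/
theorem IsConsistentWeight.exists_measure (hp : IsConsistentWeight p) :
    ∃ μ : ProbabilityMeasure (ℕ → α), ∀ n, ∀ v : Fin n → α,
      (μ : Measure (ℕ → α)).real (firstWord n ⁻¹' {v}) = p (List.ofFn v) := by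
  let _ : TopologicalSpace α := ⊥
  have : DiscreteTopology α := ⟨rfl⟩
  choose μ hμ using hp.exists_measure_length_eq
  obtain ⟨ν, -, hν⟩ := isCompact_univ.ultrafilter_le_nhds ((hyperfilter ℕ).map μ) (by simp)
  refine ⟨ν, fun n v => ?_⟩
  have hclopen : IsClopen (firstWord n ⁻¹' {v}) :=
    (isClopen_discrete {v}).preimage (continuous_pi fun i => continuous_apply _)
  have hlim : Tendsto (fun k => (μ k : Measure (ℕ → α)).real (firstWord n ⁻¹' {v}))
      (hyperfilter ℕ) (𝓝 ((ν : Measure (ℕ → α)).real (firstWord n ⁻¹' {v}))) :=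
    (NNReal.continuous_coe.tendsto _).comp
      (ProbabilityMeasure.tendsto_measure_of_isClopen_of_tendsto hν hclopen)
  refine tendsto_nhds_unique (hlim.congr' ?_) tendsto_const_nhds
  filter_upwards [Nat.hyperfilter_le_atTop (eventually_ge_atTop n)] with k hk
  exact hp.measureReal_firstWord_of_le (hμ k) hk v

end Extension

/-! ### The full shift on two symbols -/

section FullShift

open Finset

/-- The cylinder masses of a measure on `{0,1}^ℕ`, as real numbers. -/
def cylWeight (μ : Measure (ℕ → Bool)) (w : List Bool) : ℝ :=
  μ.real (cyl w)

theorem cyl_ofFn {n : ℕ} (v : Fin n → Bool) : cyl (List.ofFn v) = firstWord n ⁻¹' {v} := by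
  ext x
  simp only [cyl, Set.mem_ofPred_eq, Set.mem_preimage, Set.mem_singleton_iff, firstWord, funext_iff]
  exact (finCongr List.length_ofFn).forall_congr fun i => by simp [Fin.cast]

theorem measurableSet_cyl (w : List Bool) : MeasurableSet (cyl w) := by
  rw [← List.ofFn_get w, cyl_ofFn]
  exact measurable_firstWord _ (measurableSet_singleton _)

theorem cyl_nil : cyl [] = univ :=
  Set.eq_univ_of_forall fun _ i => i.elim0

theorem cyl_cons (e : Bool) (w : List Bool) :
    cyl (e :: w) = (fun x => x 0) ⁻¹' {e} ∩ shift ⁻¹' cyl w := by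
  ext x
  exact Fin.forall_fin_succ

theorem cyl_append_singleton (w : List Bool) (e : Bool) :
    cyl (w ++ [e]) = (fun x => x w.length) ⁻¹' {e} ∩ cyl w := by
  ext x
  induction w generalizing x with
  | nil => simp [cyl]
  | cons e' w ih =>
    rw [List.cons_append, cyl_cons, cyl_cons, inter_left_comm]
    exact and_congr_right fun _ => ih (shift x)

theorem measurable_shift : Measurable shift :=
  measurable_pi_iff.2 fun n => measurable_pi_apply (n + 1)

theorem shift_iterate_apply (i j : ℕ) (x : ℕ → Bool) : shift^[i] x j = x (i + j) := by
  induction i generalizing x with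
  | zero => simp
  | succ i ih => rw [Function.iterate_succ_apply, ih, shift, Nat.add_right_comm]

theorem itinerary_shift (n : ℕ) : itinerary shift (fun x => x 0) n = firstWord n :=
  funext fun x => funext fun i => shift_iterate_apply i 0 x

theorem isGenerator_shift : IsGenerator shift fun x => x 0 := by
  refine le_antisymm (iSup_le fun i => ?_) (MeasurableSpace.generateFrom_le ?_)
  · rintro _ ⟨S, -, rfl⟩
    refine MeasurableSpace.measurableSet_generateFrom ⟨i + 1, {v | v (Fin.last i) ∈ S}, ?_⟩
    rw [itinerary_shift]
    rfl
  · rintro _ ⟨n, S, rfl⟩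
    exact measurable_itinerary measurable_shift (measurable_pi_apply 0) n .of_discrete

variable {μ ν : Measure (ℕ → Bool)}

theorem measure_ext_of_cylWeight [IsFiniteMeasure μ] [IsFiniteMeasure ν]
    (h : cylWeight μ = cylWeight ν) : μ = ν :=
  isGenerator_shift.measure_ext measurable_shift fun n v => by
    rw [itinerary_shift, ← cyl_ofFn, ← measureReal_eq_measureReal_iff]
    exact congrFun h _

theorem IsConsistentWeight.exists_cylWeight_eq {p : List Bool → ℝ} (hp : IsConsistentWeight p) :
    ∃ μ : Measure (ℕ → Bool), IsProbabilityMeasure μ ∧ cylWeight μ = p := by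
  obtain ⟨μ, hμ⟩ := hp.exists_measure
  refine ⟨μ, inferInstance, funext fun w => ?_⟩
  rw [← List.ofFn_get w, ← hμ, cylWeight, cyl_ofFn]

variable [IsProbabilityMeasure μ]

theorem isConsistentWeight_cylWeight : IsConsistentWeight (cylWeight μ) where
  nonneg _ := measureReal_nonneg
  nil := by rw [cylWeight, cyl_nil, probReal_univ]
  sum_append w := by
    simp only [cylWeight, cyl_append_singleton]
    exact sum_measureReal_preimage_singleton_inter (f := fun x : ℕ → Bool => x w.length)
      (measurable_pi_apply _) _

theorem isStationaryWeight_cylWeight_iff :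
    IsStationaryWeight (cylWeight μ) ↔ MeasurePreserving shift μ μ := by
  have hcons w : ∑ e, cylWeight μ (e :: w) = cylWeight (μ.map shift) w := by
    simp only [cylWeight, cyl_cons, map_measureReal_apply measurable_shift (measurableSet_cyl w)]
    exact sum_measureReal_preimage_singleton_inter (f := fun x : ℕ → Bool => x 0)
      (measurable_pi_apply 0) _
  constructor
  · intro h
    refine ⟨measurable_shift, measure_ext_of_cylWeight (funext fun w => ?_)⟩
    rw [← hcons, h.sum_cons]
  · intro h
    exact { isConsistentWeight_cylWeight with sum_cons := fun w => by rw [hcons, h.map_eq] }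

theorem ksEntropy_shift (hμ : MeasurePreserving shift μ μ) :
    ksEntropy shift μ = ENNReal.ofReal (entropyRate (cylWeight μ)) := by
  refine isGenerator_shift.ksEntropy_eq hμ ?_
  have hword n : shannonEntropy μ (itinerary shift (fun x => x 0) n)
      = wordEntropy (cylWeight μ) n := by
    simp only [shannonEntropy, wordEntropy, cylWeight, cyl_ofFn, itinerary_shift]
  simpa only [hword] using (isStationaryWeight_cylWeight_iff.2 hμ).tendsto_wordEntropy_div

end FullShift

/-! ### Renewal weights -/

section RenewalWeights

/-- Masses of binary words in a renewal process, the letters `true` being the renewals: `d k` is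
the mass of a renewal followed by `k` zeros, and `f k` the mass of the given past followed by `k`
zeros. If `d 0 = 0` the division returns `0`, as it should, since then renewals have mass zero. -/
noncomputable def renewalWeight (d : ℕ → ℝ) : (ℕ → ℝ) → List Bool → ℝ
  | f, [] => f 0
  | f, false :: w => renewalWeight d (fun k => f (k + 1)) w
  | f, true :: w => (f 0 - f 1) / d 0 * renewalWeight d d w

variable {d f g : ℕ → ℝ}

theorem renewalWeight_add (w : List Bool) :
    renewalWeight d (fun k => f k + g k) w = renewalWeight d f w + renewalWeight d g w := by
  induction w generalizing f g with
  | nil => rfl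
  | cons e w ih =>
    cases e
    · exact ih
    · simp only [renewalWeight]
      ring

theorem renewalWeight_replicate_append (n : ℕ) (w : List Bool) :
    renewalWeight d f (List.replicate n false ++ w) = renewalWeight d (fun k => f (k + n)) w := by
  induction n generalizing f with
  | zero => rfl
  | succ n ih =>
    rw [List.replicate_succ, List.cons_append, renewalWeight, ih]
    simp only [add_assoc]

theorem renewalWeight_replicate (n : ℕ) : renewalWeight d f (List.replicate n false) = f n := by
  rw [← List.append_nil (List.replicate n false), renewalWeight_replicate_append, renewalWeight,
    Nat.zero_add]

theorem renewalWeight_replicate_append_true (n : ℕ) (u : List Bool) :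
    renewalWeight d f (List.replicate n false ++ true :: u)
      = (f n - f (n + 1)) / d 0 * renewalWeight d d u := by
  rw [renewalWeight_replicate_append, renewalWeight, Nat.zero_add, Nat.add_comm 1]

theorem renewalWeight_nonneg (hd : Antitone d) (hd0 : ∀ k, 0 ≤ d k) (hf : Antitone f)
    (hf0 : ∀ k, 0 ≤ f k) (w : List Bool) : 0 ≤ renewalWeight d f w := by
  induction w generalizing f with
  | nil => exact hf0 0
  | cons e w ih =>
    cases e
    · exact ih (fun _ _ h => hf (Nat.succ_le_succ h)) fun k => hf0 (k + 1)
    · exact mul_nonneg (div_nonneg (sub_nonneg.2 (hf zero_le_one)) (hd0 0)) (ih hd hd0)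

theorem sum_renewalWeight_append (hd : d 0 = 0 → ∀ k, d (k + 1) = d k)
    (hf : d 0 = 0 → ∀ k, f (k + 1) = f k) (w : List Bool) :
    ∑ e, renewalWeight d f (w ++ [e]) = renewalWeight d f w := by
  induction w generalizing f with
  | nil =>
    simp only [Fintype.sum_bool, List.nil_append, renewalWeight]
    by_cases h : d 0 = 0
    · rw [h, hf h, sub_self, mul_zero, zero_add]
    · rw [div_mul_cancel₀ _ h, sub_add_cancel]
  | cons e w ih =>
    cases e
    · exact ih fun h k => hf h (k + 1)
    · simp only [List.cons_append, renewalWeight, ← Finset.mul_sum, ih hd]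

theorem sum_renewalWeight_cons (hd : ∀ k, d k = f k - f (k + 1)) (hd0 : d 0 = 0 → ∀ k, d k = 0)
    (w : List Bool) : ∑ e, renewalWeight d f (e :: w) = renewalWeight d f w := by
  rw [Fintype.sum_bool, renewalWeight, renewalWeight, ← hd]
  by_cases h : d 0 = 0
  · have hf : (fun k => f (k + 1)) = f := funext fun k => by linarith [hd k, hd0 h k]
    rw [h, div_zero, zero_mul, zero_add, hf]
  · rw [div_self h, one_mul, ← renewalWeight_add]
    simp only [hd, sub_add_cancel]

theorem isStationaryWeight_renewalWeight (hf1 : f 0 = 1) (hf0 : ∀ k, 0 ≤ f k) (hf : Antitone f)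
    (hd : Antitone fun k => f k - f (k + 1)) :
    IsStationaryWeight (renewalWeight (fun k => f k - f (k + 1)) f) := by
  have hd0 k : 0 ≤ f k - f (k + 1) := sub_nonneg.2 (hf k.le_succ)
  have hvanish (h : f 0 - f 1 = 0) k : f k - f (k + 1) = 0 :=
    le_antisymm ((hd k.zero_le).trans_eq h) (hd0 k)
  exact
    { nonneg := renewalWeight_nonneg hd hd0 hf hf0
      nil := hf1
      sum_append := sum_renewalWeight_append
        (fun h k => (hvanish h (k + 1)).trans (hvanish h k).symm)
        fun h k => (sub_eq_zero.1 (hvanish h k)).symm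
      sum_cons := sum_renewalWeight_cons (fun _ => rfl) hvanish }

/-- The words consisting of zeros only. -/
def zeroBlocks : Set (List Bool) :=
  {w | w = List.replicate w.length false}

theorem nil_mem_zeroBlocks : [] ∈ zeroBlocks :=
  rfl

theorem exists_eq_replicate_append_true {w : List Bool} (hw : w ∉ zeroBlocks) :
    ∃ n u, w = List.replicate n false ++ true :: u := by
  induction w with
  | nil => exact (hw nil_mem_zeroBlocks).elim
  | cons e w ih =>
    cases e
    · obtain ⟨n, u, rfl⟩ := ih fun h => hw (congrArg (false :: ·) h)
      exact ⟨n + 1, u, rfl⟩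
    · exact ⟨0, w, rfl⟩

theorem isMarkovAt_renewalWeight {w : List Bool} (hw : w ∉ zeroBlocks) :
    IsMarkovAt (renewalWeight d f) w := by
  obtain ⟨n, u, rfl⟩ := exists_eq_replicate_append_true hw
  intro e e'
  cases e <;>
  · simp only [List.append_assoc, List.cons_append, renewalWeight,
      renewalWeight_replicate_append_true]
    ring

theorem IsStationaryWeight.zeroBlock_surround {p : List Bool → ℝ} (hp : IsStationaryWeight p)
    {a : ℕ → ℝ} (h : ∀ n, p (List.replicate n false) = a n) (n : ℕ) :
    p (false :: (List.replicate n false ++ [false])) = a (n + 2) ∧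
    p (false :: (List.replicate n false ++ [true])) = a (n + 1) - a (n + 2) ∧
    p (true :: (List.replicate n false ++ [false])) = a (n + 1) - a (n + 2) ∧
    p (true :: (List.replicate n false ++ [true])) = a n - 2 * a (n + 1) + a (n + 2) := by
  have hcons w : p (true :: w) = p w - p (false :: w) := by
    rw [← hp.sum_cons w, Fintype.sum_bool, add_sub_cancel_right]
  have happend w : p (w ++ [true]) = p w - p (w ++ [false]) := by
    rw [← hp.sum_append w, Fintype.sum_bool, add_sub_cancel_right]
  simp only [← List.cons_append, happend]
  simp only [List.cons_append, hcons, ← List.replicate_succ, ← List.replicate_succ', h, true_and]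
  ring

end RenewalWeights

/-! ### Measures with prescribed masses of the blocks of zeros -/

section MaximalEntropy

variable {a : ℕ → ℝ} {μ ν : Measure (ℕ → Bool)}

theorem markovRel_iff : markovRel μ ↔ ∀ w ∉ zeroBlocks, IsMarkovAt (cylWeight μ) w :=
  Iff.rfl

theorem cylRel.agreeAround (hμ : cylRel a μ) (hν : cylRel a ν) :
    AgreeAround zeroBlocks (cylWeight μ) (cylWeight ν) := by
  intro w hw e e'
  rw [hw]
  obtain ⟨h00, h01, h10, h11⟩ := hμ w.length
  obtain ⟨k00, k01, k10, k11⟩ := hν w.length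
  cases e <;> cases e'
  exacts [h00.trans k00.symm, h01.trans k01.symm, h10.trans k10.symm, h11.trans k11.symm]

variable [IsProbabilityMeasure μ] [IsProbabilityMeasure ν]

theorem cylRel_of_replicate (ha0 : a 0 = 1) (hμ : MeasurePreserving shift μ μ)
    (h : ∀ n, 1 ≤ n → μ.real (cyl (List.replicate n false)) = a n) : cylRel a μ := by
  have hμ' := isStationaryWeight_cylWeight_iff.2 hμ
  refine hμ'.zeroBlock_surround fun n => ?_
  rcases n.eq_zero_or_pos with rfl | hn
  · exact hμ'.nil.trans ha0.symm
  · exact h n hn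

theorem exists_cylRel_markovRel (ha0 : a 0 = 1) (hpos : ∀ n, 0 ≤ a n) (hmono : Antitone a)
    (hconv : Antitone fun n => a n - a (n + 1)) :
    ∃ μ : Measure (ℕ → Bool), IsProbabilityMeasure μ ∧ MeasurePreserving shift μ μ ∧
      (∀ n, μ.real (cyl (List.replicate n false)) = a n) ∧ markovRel μ := by
  have hp := isStationaryWeight_renewalWeight ha0 hpos hmono hconv
  obtain ⟨μ, hμ, hcyl⟩ := hp.exists_cylWeight_eq
  refine ⟨μ, hμ, isStationaryWeight_cylWeight_iff.1 (hcyl ▸ hp), fun n => ?_, ?_⟩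
  · exact (congrFun hcyl _).trans (renewalWeight_replicate n)
  · rw [markovRel_iff, hcyl]
    exact fun w hw => isMarkovAt_renewalWeight hw

theorem eq_of_markovRel (hμ : MeasurePreserving shift μ μ) (hν : MeasurePreserving shift ν ν)
    (haμ : cylRel a μ) (haν : cylRel a ν) (hmμ : markovRel μ) (hmν : markovRel ν) : μ = ν :=
  measure_ext_of_cylWeight <| funext <|
    eq_of_isMarkovAt (isStationaryWeight_cylWeight_iff.2 hμ) (isStationaryWeight_cylWeight_iff.2 hν)
      nil_mem_zeroBlocks (haμ.agreeAround haν) hmμ hmν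

theorem ksEntropy_le_of_markovRel (hμ : MeasurePreserving shift μ μ)
    (hν : MeasurePreserving shift ν ν) (haμ : cylRel a μ) (haν : cylRel a ν)
    (hmμ : markovRel μ) : ksEntropy shift ν ≤ ksEntropy shift μ := by
  rw [ksEntropy_shift hν, ksEntropy_shift hμ]
  exact ENNReal.ofReal_le_ofReal <| entropyRate_le_of_isMarkovAt
    (isStationaryWeight_cylWeight_iff.2 hν) (isStationaryWeight_cylWeight_iff.2 hμ)
    nil_mem_zeroBlocks (haν.agreeAround haμ) hmμ

theorem markovRel_of_ksEntropy_eq (hμ : MeasurePreserving shift μ μ)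
    (hν : MeasurePreserving shift ν ν) (haμ : cylRel a μ) (haν : cylRel a ν)
    (hmμ : markovRel μ) (h : ksEntropy shift ν = ksEntropy shift μ) : markovRel ν := by
  have hp := isStationaryWeight_cylWeight_iff.2 hν
  have hq := isStationaryWeight_cylWeight_iff.2 hμ
  rw [ksEntropy_shift hν, ksEntropy_shift hμ, ENNReal.ofReal_eq_ofReal_iff
    hp.entropyRate_nonneg hq.entropyRate_nonneg] at h
  exact isMarkovAt_of_entropyRate_eq hp hq nil_mem_zeroBlocks (haν.agreeAround haμ) hmμ h

end MaximalEntropy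

/-- **Lemma 5.6.** If `1 = a_0 ≥ a_1 ≥ ⋯` and `a_i - 2a_{i+1} + a_{i+2} ≥ 0` for all `i`,
there exists a shift-invariant probability measure `μ` with `μ([0^n]) = a_n` satisfying
the relations of Lemma 5.4 together with `p_{ε w ε'} = p_{ε w} p_{w ε'} / p_w` for `w` not
a block of zeros; these relations determine `μ` uniquely, and `μ` is the unique measure of
maximal entropy among invariant measures `ν` with `ν([0^n]) = a_n` for all `n ≥ 1`. -/
theorem maximal_entropy_measure (a : ℕ → ℝ) (ha0 : a 0 = 1) (hpos : ∀ n, 0 ≤ a n)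
    (hmono : ∀ i : ℕ, a (i + 1) ≤ a i)
    (hconv : ∀ i : ℕ, 0 ≤ a i - 2 * a (i + 1) + a (i + 2)) :
    ∃ μ : Measure (ℕ → Bool),
      (IsProbabilityMeasure μ ∧ MeasurePreserving shift μ μ ∧
        (∀ n : ℕ, 1 ≤ n → (μ (cyl (List.replicate n false))).toReal = a n) ∧
        cylRel a μ ∧ markovRel μ) ∧
      (∀ μ' : Measure (ℕ → Bool), IsProbabilityMeasure μ' → MeasurePreserving shift μ' μ' →
        cylRel a μ' → markovRel μ' → μ' = μ) ∧
      (∀ ν : Measure (ℕ → Bool), IsProbabilityMeasure ν → MeasurePreserving shift ν ν →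
        (∀ n : ℕ, 1 ≤ n → (ν (cyl (List.replicate n false))).toReal = a n) →
        ksEntropy shift ν ≤ ksEntropy shift μ ∧
          (ksEntropy shift ν = ksEntropy shift μ → ν = μ)) := by
  have hconv' : Antitone fun n => a n - a (n + 1) :=
    antitone_nat_of_succ_le fun n => by linarith [hconv n]
  obtain ⟨μ, _, hμ, hzero, hmarkov⟩ :=
    exists_cylRel_markovRel ha0 hpos (antitone_nat_of_succ_le hmono) hconv'
  have hrel : cylRel a μ := cylRel_of_replicate ha0 hμ fun n _ => hzero n
  refine ⟨μ, ⟨‹_›, hμ, fun n _ => hzero n, hrel, hmarkov⟩, fun ν _ hν hνrel hνmarkov =>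
    eq_of_markovRel hν hμ hνrel hrel hνmarkov hmarkov, fun ν _ hν hνzero => ?_⟩
  have hνrel : cylRel a ν := cylRel_of_replicate ha0 hν hνzero
  exact ⟨ksEntropy_le_of_markovRel hμ hν hrel hνrel hmarkov, fun heq =>
    eq_of_markovRel hν hμ hνrel hrel (markovRel_of_ksEntropy_eq hμ hν hrel hνrel hmarkov heq)
      hmarkov⟩
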